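/- Let n, t be integers with 1 ≤ t ≤ n−1. Then every complete linear map φ: 𝒢_n → 𝒢_n satisfying, for all G ∈ 𝒢_n, that α(φ(G)) = t if and only if α(G) = t, is a bijection of 𝒢_n. -/

import Mathlib

/-- The independence number of a simple graph: the maximum cardinality of a set
of pairwise nonadjacent vertices. -/
noncomputable def indepNum {V : Type*} (G : SimpleGraph V) : ℕ :=
  sSup {k | ∃ s : Finset V, (∀ a ∈ s, ∀ b ∈ s, a ≠ b → ¬ G.Adj a b) ∧ s.card = k}

/-- `G_{ij}`: the graph whose only edge is `(i, j)`. -/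
def singleEdge {V : Type*} (i j : V) : SimpleGraph V :=
  SimpleGraph.fromEdgeSet {s(i, j)}

/-- A map on graphs is linear if it preserves unions. -/
def IsLinearMap' {V : Type*} (φ : SimpleGraph V → SimpleGraph V) : Prop :=
  ∀ G H : SimpleGraph V, φ (G ⊔ H) = φ G ⊔ φ H

/-- A complete linear map: a linear map sending the complete graph to itself. -/
def IsCompleteLinearMap {V : Type*} (φ : SimpleGraph V → SimpleGraph V) : Prop :=
  IsLinearMap' φ ∧ φ ⊤ = ⊤

/-- A vertex permutation. -/
def IsVertexPermutation {V : Type*} (φ : SimpleGraph V → SimpleGraph V) : Prop :=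
  ∃ σ : Equiv.Perm V, ∀ i j : V, i ≠ j → φ (singleEdge i j) = singleEdge (σ i) (σ j)

/-- An edge permutation. -/
def IsEdgePermutation {V : Type*} (φ : SimpleGraph V → SimpleGraph V) : Prop :=
  φ ⊤ = ⊤ ∧ ∀ i j : V, i ≠ j → ((φ (singleEdge i j)).edgeSet).ncard = 1

/-- `G` has an independent set of size `s`. -/
def HasInd {n : ℕ} (s : ℕ) (G : SimpleGraph (Fin n)) : Prop :=
  ∃ S : Finset (Fin n), S.card = s ∧ ∀ a ∈ S, ∀ b ∈ S, a ≠ b → ¬ G.Adj a b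

/-- All edges except those within `S`. -/
def coK {n : ℕ} (S : Finset (Fin n)) : SimpleGraph (Fin n) where
  Adj a b := a ≠ b ∧ ¬ (a ∈ S ∧ b ∈ S)
  symm := ⟨fun a b h => ⟨h.1.symm, fun h' => h.2 ⟨h'.2, h'.1⟩⟩⟩
  loopless := ⟨fun a h => h.1 rfl⟩

theorem indepNum_spec {n : ℕ} (G : SimpleGraph (Fin n)) (s : ℕ) :
    s ≤ indepNum G ↔ HasInd s G := by
  have hb : BddAbove {k | ∃ s : Finset (Fin n),
      (∀ a ∈ s, ∀ b ∈ s, a ≠ b → ¬ G.Adj a b) ∧ s.card = k} := by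
    refine ⟨n, ?_⟩
    rintro k ⟨S, -, rfl⟩
    simpa using S.card_le_univ
  constructor
  · intro h
    have hm := Nat.sSup_mem (s := {k | ∃ s : Finset (Fin n),
      (∀ a ∈ s, ∀ b ∈ s, a ≠ b → ¬ G.Adj a b) ∧ s.card = k}) ⟨0, ∅, by simp⟩ hb
    obtain ⟨S, hS, hc⟩ := hm
    have h2 : s ≤ S.card := by rw [hc]; exact h
    obtain ⟨T, hT, hTc⟩ := Finset.exists_subset_card_eq h2
    exact ⟨T, hTc, fun a ha b hb => hS a (hT ha) b (hT hb)⟩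
  · rintro ⟨S, hc, hS⟩
    exact le_csSup hb ⟨S, hS, hc⟩

theorem HasInd.anti {n s : ℕ} {G H : SimpleGraph (Fin n)} (h : G ≤ H) (hH : HasInd s H) :
    HasInd s G := by
  obtain ⟨S, hc, hS⟩ := hH
  exact ⟨S, hc, fun a ha b hb hab hadj => hS a ha b hb hab (h hadj)⟩

theorem indepNum_anti {n : ℕ} {G H : SimpleGraph (Fin n)} (h : G ≤ H) :
    indepNum H ≤ indepNum G :=
  (indepNum_spec _ _).2 (((indepNum_spec _ _).1 le_rfl).anti h)

theorem indepNum_coK {n : ℕ} (S : Finset (Fin n)) (hS : 1 ≤ S.card) :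
    indepNum (coK S) = S.card := by
  apply le_antisymm
  · obtain ⟨T, hc, hT⟩ := (indepNum_spec (coK S) _).1 le_rfl
    rw [← hc]
    by_cases h : T ⊆ S
    · exact Finset.card_le_card h
    · obtain ⟨x, hx, hxS⟩ := Finset.not_subset.1 h
      have : T.card ≤ 1 := by
        have : Nonempty (Fin n) := ⟨x⟩
        rw [Finset.card_le_one_iff_subset_singleton]
        refine ⟨x, fun y hy => ?_⟩
        by_contra hne
        simp only [Finset.mem_singleton] at hne
        exact hT y hy x hx hne ⟨hne, fun h => hxS h.2⟩
      omega
  · exact (indepNum_spec _ _).2 ⟨S, rfl, fun a ha b hb _ h => h.2 ⟨ha, hb⟩⟩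

theorem exists_sub {n t : ℕ} (htn : t ≤ n) (G : SimpleGraph (Fin n)) (h : indepNum G ≤ t) :
    ∃ H ≤ G, indepNum H = t := by
  obtain ⟨H, hHG, hH⟩ := exists_minimal_le_of_wellFoundedLT
    (fun H : SimpleGraph (Fin n) => indepNum H ≤ t) G h
  refine ⟨H, hHG, ?_⟩
  by_contra hne
  have hlt : indepNum H < t := lt_of_le_of_ne hH.1 hne
  have hbot : H ≠ ⊥ := by
    rintro rfl
    have : n ≤ indepNum (⊥ : SimpleGraph (Fin n)) :=
      (indepNum_spec _ _).2 ⟨Finset.univ, by simp, by simp⟩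
    omega
  obtain ⟨a, b, hab⟩ := SimpleGraph.ne_bot_iff_exists_adj.1 hbot
  have hle : H.deleteEdges {s(a, b)} ≤ H := SimpleGraph.deleteEdges_le _
  have h1 : indepNum (H.deleteEdges {s(a, b)}) ≤ t := by
    obtain ⟨S, hc, hS⟩ := (indepNum_spec (H.deleteEdges {s(a, b)}) _).1 le_rfl
    have : (S.erase a).card ≤ indepNum H := by
      refine (indepNum_spec _ _).2 ⟨S.erase a, rfl, fun x hx y hy hxy hadj => ?_⟩
      rw [Finset.mem_erase] at hx hy
      refine hS x hx.2 y hy.2 hxy ?_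
      rw [SimpleGraph.deleteEdges_adj]
      refine ⟨hadj, ?_⟩
      simp only [Set.mem_singleton_iff, Sym2.eq_iff]
      rintro (h | h)
      · exact hx.1 h.1
      · exact hy.1 h.2
    have := Finset.pred_card_le_card_erase (s := S) (a := a)
    omega
  have h2 := hH.2 h1 hle hab
  rw [SimpleGraph.deleteEdges_adj] at h2
  exact h2.2 rfl

theorem lin_mono {n : ℕ} {φ : SimpleGraph (Fin n) → SimpleGraph (Fin n)} (h : IsLinearMap' φ) :
    Monotone φ := by
  intro G H hGH
  have := h G H
  rw [sup_eq_right.2 hGH] at this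
  rw [this]
  exact le_sup_left

theorem lin_adj {n : ℕ} {φ : SimpleGraph (Fin n) → SimpleGraph (Fin n)} (h : IsLinearMap' φ)
    (a b : Fin n) (F : Finset (Sym2 (Fin n))) :
    (φ (SimpleGraph.fromEdgeSet (F : Set (Sym2 (Fin n))))).Adj a b →
     (φ ⊥).Adj a b ∨ ∃ e ∈ F, (φ (SimpleGraph.fromEdgeSet {e})).Adj a b := by
  classical
  induction F using Finset.induction_on with
  | empty => intro h; left; simpa using h
  | insert e F he ih =>
    intro h'
    rw [Finset.coe_insert, Set.insert_eq, SimpleGraph.fromEdgeSet_union, h] at h'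
    rcases h' with h' | h'
    · exact Or.inr ⟨e, by simp, h'⟩
    · rcases ih h' with h' | ⟨e', he', h'⟩
      · exact Or.inl h'
      · exact Or.inr ⟨e', by simp [he'], h'⟩

theorem lin_adj' {n : ℕ} {φ : SimpleGraph (Fin n) → SimpleGraph (Fin n)} (h : IsLinearMap' φ)
    (a b : Fin n) (G : SimpleGraph (Fin n)) (hG : (φ G).Adj a b) :
     (φ ⊥).Adj a b ∨ ∃ c d, G.Adj c d ∧ (φ (singleEdge c d)).Adj a b := by
  classical
  have h1 := lin_adj h a b G.edgeSet.toFinite.toFinset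
  simp only [Set.Finite.coe_toFinset, SimpleGraph.fromEdgeSet_edgeSet, Set.Finite.mem_toFinset] at h1
  rcases h1 hG with h1 | ⟨e, he, h1⟩
  · exact Or.inl h1
  · induction e using Sym2.ind with
    | _ c d => exact Or.inr ⟨c, d, he, h1⟩

theorem lin_surj {n : ℕ} {φ : SimpleGraph (Fin n) → SimpleGraph (Fin n)} (h : IsLinearMap' φ)
    (h0 : φ ⊥ = ⊥) (h1 : ∀ a b : Fin n, a ≠ b → ∃ G, φ G = singleEdge a b) :
    Function.Surjective φ := by
  classical
  have key : ∀ F : Finset (Sym2 (Fin n)),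
      ∃ G, φ G = SimpleGraph.fromEdgeSet (F : Set (Sym2 (Fin n))) := by
    intro F
    induction F using Finset.induction_on with
    | empty => exact ⟨⊥, by simp [h0]⟩
    | insert e F he ih =>
      obtain ⟨G, hG⟩ := ih
      have : ∃ H, φ H = SimpleGraph.fromEdgeSet {e} := by
        induction e using Sym2.ind with
        | _ c d =>
          by_cases hcd : c = d
          · refine ⟨⊥, ?_⟩
            rw [h0]
            ext x y
            simp only [SimpleGraph.bot_adj, SimpleGraph.fromEdgeSet_adj, Set.mem_singleton_iff,
              Sym2.eq_iff, false_iff]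
            grind
          · exact h1 c d hcd
      obtain ⟨H, hH⟩ := this
      refine ⟨H ⊔ G, ?_⟩
      rw [h, hH, hG, ← SimpleGraph.fromEdgeSet_union, Finset.coe_insert, Set.insert_eq]
  intro G
  obtain ⟨H, hH⟩ := key G.edgeSet.toFinite.toFinset
  exact ⟨H, by simpa using hH⟩

/-- The `s`-subsets containing both `a` and `b`. -/
def sups {n : ℕ} (s : ℕ) (a b : Fin n) : Finset (Finset (Fin n)) :=
  Finset.univ.filter fun S => S.card = s ∧ a ∈ S ∧ b ∈ S

theorem sups_card_le {n : ℕ} (s : ℕ) (a b c d : Fin n) (hab : a ≠ b) (hcd : c ≠ d) :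
    (sups s a b).card ≤ (sups s c d).card := by
  obtain ⟨σ, h1, h2⟩ : ∃ σ : Equiv.Perm (Fin n), σ a = c ∧ σ b = d := by
    refine ⟨(Equiv.swap a c).trans (Equiv.swap (Equiv.swap a c b) d), ?_, ?_⟩
    · simp only [Equiv.trans_apply, Equiv.swap_apply_left]
      apply Equiv.swap_apply_of_ne_of_ne
      · intro h
        have h3 : Equiv.swap a c a = Equiv.swap a c b := by simpa using h
        exact hab ((Equiv.swap a c).injective h3)
      · exact hcd
    · simp
  apply Finset.card_le_card_of_injOn (fun S => S.map σ.toEmbedding)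
  · intro S hS
    simp only [sups, Finset.coe_filter, Finset.mem_univ, true_and, Set.mem_ofPred_eq,
      Finset.card_map] at hS ⊢
    refine ⟨hS.1, ?_, ?_⟩
    · rw [← h1]; exact Finset.mem_map_of_mem σ.toEmbedding hS.2.1
    · rw [← h2]; exact Finset.mem_map_of_mem σ.toEmbedding hS.2.2
  · intro S _ T _ h
    exact Finset.map_injective _ h

theorem core {n s : ℕ} (hs : 2 ≤ s) (hsn : s ≤ n)
    (φ : SimpleGraph (Fin n) → SimpleGraph (Fin n)) (hφ : IsCompleteLinearMap φ)
    (hP : ∀ G, HasInd s (φ G) ↔ HasInd s G)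
    (sep : ∀ a b c d : Fin n, a ≠ b → c ≠ d → s(a, b) ≠ s(c, d) →
      ∃ S : Finset (Fin n), S.card = s ∧ a ∈ S ∧ b ∈ S ∧ ¬ (c ∈ S ∧ d ∈ S)) :
    Function.Bijective φ := by
  classical
  obtain ⟨hl, htop⟩ := hφ
  have hex : ∀ S : {S : Finset (Fin n) // S.card = s}, ∃ T : {S : Finset (Fin n) // S.card = s},
      ∀ a ∈ T.1, ∀ b ∈ T.1, a ≠ b → ¬ (φ (coK S.1)).Adj a b := by
    rintro ⟨S, hS⟩
    obtain ⟨T, hT, h⟩ := (hP (coK S)).2 ⟨S, hS, fun a ha b hb _ h => h.2 ⟨ha, hb⟩⟩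
    exact ⟨⟨T, hT⟩, h⟩
  choose p hp using hex
  -- an edge whose image meets `p S` lies within `S`
  have hin : ∀ S, ∀ a ∈ (p S).1, ∀ b ∈ (p S).1, a ≠ b → ∀ c d, c ≠ d →
      (φ (singleEdge c d)).Adj a b → c ∈ S.1 ∧ d ∈ S.1 := by
    intro S a ha b hb hab c d hcd hadj
    by_contra hno
    refine hp S a ha b hb hab (lin_mono hl ?_ hadj)
    intro x y hxy
    simp only [singleEdge, SimpleGraph.fromEdgeSet_adj, Set.mem_singleton_iff, Sym2.eq_iff] at hxy
    refine ⟨hxy.2, ?_⟩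
    rcases hxy.1 with ⟨rfl, rfl⟩ | ⟨rfl, rfl⟩
    · exact hno
    · exact fun h => hno ⟨h.2, h.1⟩
  have hbotS : ∀ S, ∀ a ∈ (p S).1, ∀ b ∈ (p S).1, a ≠ b → ¬ (φ ⊥).Adj a b :=
    fun S a ha b hb hab h => hp S a ha b hb hab (lin_mono hl bot_le h)
  have hinj : Function.Injective p := by
    intro S T hST
    by_contra hne
    have hns : ¬ S.1 ⊆ T.1 := by
      intro h
      exact hne (Subtype.ext (Finset.eq_of_subset_of_card_le h (by rw [S.2, T.2])))
    obtain ⟨x, hxS, hxT⟩ := Finset.not_subset.1 hns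
    obtain ⟨y, hyS, hyx⟩ := Finset.exists_mem_ne (s := S.1) (by rw [S.2]; omega) x
    have h1 : HasInd s (φ (coK S.1 ⊔ singleEdge x y)) := by
      refine ⟨(p S).1, (p S).2, fun a ha b hb hab hadj => ?_⟩
      rw [hl] at hadj
      rcases hadj with h | h
      · exact hp S a ha b hb hab h
      · rw [hST] at ha hb
        exact hxT (hin T a ha b hb hab x y hyx.symm h).1
    rw [hP] at h1
    obtain ⟨U, hU, hUi⟩ := h1
    have hUS : U = S.1 := by
      apply Finset.eq_of_subset_of_card_le _ (by rw [S.2, hU])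
      intro z hz
      by_contra hzS
      obtain ⟨w, hw, hwz⟩ := Finset.exists_mem_ne (s := U) (by rw [hU]; omega) z
      exact hUi z hz w hw hwz.symm (Or.inl ⟨hwz.symm, fun h => hzS h.1⟩)
    subst hUS
    refine hUi x hxS y hyS hyx.symm (Or.inr ?_)
    simp [singleEdge, hyx.symm]
  have hsurj : Function.Surjective p := Finite.injective_iff_surjective.1 hinj
  have hbot : φ ⊥ = ⊥ := by
    rw [eq_bot_iff]
    intro a b hab
    obtain ⟨T, hsub, hT⟩ := Finset.exists_superset_card_eq (s := ({a, b} : Finset (Fin n)))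
      (n := s) (by rw [Finset.card_pair hab.ne]; exact hs) (by simpa using hsn)
    obtain ⟨S, hS⟩ := hsurj ⟨T, hT⟩
    refine (hbotS S a ?_ b ?_ hab.ne hab).elim
    · rw [hS]; exact hsub (by simp)
    · rw [hS]; exact hsub (by simp)
  -- the correspondence
  have hiff : ∀ a b c d : Fin n, a ≠ b → c ≠ d → (φ (singleEdge c d)).Adj a b →
      ∀ S, (c ∈ S.1 ∧ d ∈ S.1) ↔ (a ∈ (p S).1 ∧ b ∈ (p S).1) := by
    intro a b c d hab hcd hadj
    let q : {S : Finset (Fin n) // S.card = s} ≃ {S : Finset (Fin n) // S.card = s} :=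
      Equiv.ofBijective p ⟨hinj, hsurj⟩
    let g : Finset (Fin n) → Finset (Fin n) :=
      fun T => if h : T.card = s then (q.symm ⟨T, h⟩).1 else T
    have hg : ∀ S : {S : Finset (Fin n) // S.card = s}, g (p S).1 = S.1 := by
      intro S
      have : q.symm (p S) = S := q.symm_apply_apply S
      simp only [g, (p S).2, dif_pos]
      rw [this]
    have hsubset : (sups s a b).image g ⊆ sups s c d := by
      intro U hU
      obtain ⟨T, hT, rfl⟩ := Finset.mem_image.1 hU
      simp only [sups, Finset.mem_filter, Finset.mem_univ, true_and] at hT ⊢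
      obtain ⟨S, hS⟩ := hsurj ⟨T, hT.1⟩
      have hTe : T = (p S).1 := by rw [hS]
      subst hTe
      rw [hg]
      exact ⟨S.2, hin S a hT.2.1 b hT.2.2 hab c d hcd hadj⟩
    have hcard : ((sups s a b).image g).card = (sups s a b).card := by
      apply Finset.card_image_of_injOn
      intro T hT T' hT' h
      simp only [sups, Finset.coe_filter, Finset.mem_univ, true_and, Set.mem_ofPred_eq] at hT hT'
      obtain ⟨S, hS⟩ := hsurj ⟨T, hT.1⟩
      obtain ⟨S', hS'⟩ := hsurj ⟨T', hT'.1⟩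
      have hTe : T = (p S).1 := by rw [hS]
      have hTe' : T' = (p S').1 := by rw [hS']
      rw [hTe, hTe', hg, hg] at h
      rw [hTe, hTe', Subtype.ext h]
    have heq : (sups s a b).image g = sups s c d :=
      Finset.eq_of_subset_of_card_le hsubset (by rw [hcard]; exact sups_card_le s c d a b hcd hab)
    intro S
    constructor
    · intro h
      have hm : S.1 ∈ sups s c d := by simp [sups, S.2, h]
      rw [← heq] at hm
      obtain ⟨T, hT, hgT⟩ := Finset.mem_image.1 hm
      simp only [sups, Finset.mem_filter, Finset.mem_univ, true_and] at hT
      obtain ⟨S', hS'⟩ := hsurj ⟨T, hT.1⟩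
      have hTe : T = (p S').1 := by rw [hS']
      rw [hTe, hg] at hgT
      rw [← Subtype.ext hgT, ← hTe]
      exact hT.2
    · intro h
      exact hin S a h.1 b h.2 hab c d hcd hadj
  have hsur : Function.Surjective φ := by
    apply lin_surj hl hbot
    intro a b hab
    have h1 : (φ ⊤).Adj a b := by rw [htop]; exact hab
    rcases lin_adj' hl a b ⊤ h1 with h | ⟨c, d, hcd, h⟩
    · rw [hbot] at h; exact h.elim
    have hcd : c ≠ d := hcd
    refine ⟨singleEdge c d, ?_⟩
    have huniq : ∀ x y, (φ (singleEdge c d)).Adj x y → s(a, b) = s(x, y) := by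
      intro x y hxy
      by_contra hne
      obtain ⟨T, hT, haT, hbT, hno⟩ := sep a b x y hab hxy.ne hne
      obtain ⟨S, hS⟩ := hsurj ⟨T, hT⟩
      have hTe : T = (p S).1 := by rw [hS]
      rw [hTe] at haT hbT hno
      exact hno ((hiff x y c d hxy.ne hcd hxy S).1 ((hiff a b c d hab hcd h S).2 ⟨haT, hbT⟩))
    ext x y
    simp only [singleEdge, SimpleGraph.fromEdgeSet_adj, Set.mem_singleton_iff]
    constructor
    · intro hxy
      exact ⟨(huniq x y hxy).symm, hxy.ne⟩
    · rintro ⟨he, -⟩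
      rcases Sym2.eq_iff.1 he with ⟨rfl, rfl⟩ | ⟨rfl, rfl⟩
      · exact h
      · exact h.symm
  exact ⟨Finite.injective_iff_surjective.2 hsur, hsur⟩

theorem stmt9 (n t : ℕ) (ht : 1 ≤ t) (htn : t ≤ n - 1)
    (φ : SimpleGraph (Fin n) → SimpleGraph (Fin n)) (hφ : IsCompleteLinearMap φ)
    (hpres : ∀ G : SimpleGraph (Fin n), indepNum (φ G) = t ↔ indepNum G = t) :
    Function.Bijective φ := by
  classical
  have hmono := lin_mono hφ.1
  rcases Nat.lt_or_ge 1 t with h2 | h1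
  · apply core (s := t) h2 (by omega) φ hφ
    · intro G
      constructor
      · intro h
        by_contra hno
        rw [← indepNum_spec] at h hno
        obtain ⟨H, hHG, hH⟩ := exists_sub (t := t) (by omega) G (by omega)
        have h3 := (hpres H).2 hH
        have h4 := indepNum_anti (hmono hHG)
        have h5 := (hpres G).1 (by omega)
        omega
      · rintro ⟨S, hc, hS⟩
        have h3 := (hpres (coK S)).2 (by rw [indepNum_coK S (by omega), hc])
        have hle : G ≤ coK S := fun a b hab => ⟨hab.ne, fun h => hS a h.1 b h.2 hab.ne hab⟩
        have := indepNum_anti (hmono hle)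
        rw [← indepNum_spec]
        omega
    · intro a b c d hab hcd hne
      obtain ⟨x, hxa, hxb, hx⟩ : ∃ x, x ≠ a ∧ x ≠ b ∧ (x = c ∨ x = d) := by
        by_contra hno
        push Not at hno
        have := hno c
        have := hno d
        apply hne
        rw [Sym2.eq_iff]
        grind
      have hsub : ({a, b} : Finset (Fin n)) ⊆ Finset.univ.erase x := by
        intro y hy
        simp only [Finset.mem_insert, Finset.mem_singleton] at hy
        simp only [Finset.mem_erase, Finset.mem_univ, and_true]
        rcases hy with rfl | rfl
        · exact hxa.symm
        · exact hxb.symm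
      obtain ⟨S, hS1, hS2, hS⟩ := Finset.exists_subsuperset_card_eq hsub (n := t)
        (by rw [Finset.card_pair hab]; omega) (by simpa using htn)
      refine ⟨S, hS, hS1 (by simp), hS1 (by simp), fun h => ?_⟩
      have hxS : x ∉ S := fun h => by simpa using hS2 h
      rcases hx with rfl | rfl
      · exact hxS h.1
      · exact hxS h.2
  · have ht1 : t = 1 := by omega
    subst ht1
    apply core (s := 2) le_rfl (by omega) φ hφ
    · intro G
      have hge : ∀ G : SimpleGraph (Fin n), 1 ≤ indepNum G := fun G =>
        (indepNum_spec _ _).2 ⟨{⟨0, by omega⟩}, by simp, by simp⟩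
      rw [← indepNum_spec, ← indepNum_spec]
      have := hge G
      have := hge (φ G)
      have := hpres G
      omega
    · intro a b c d hab hcd hne
      refine ⟨{a, b}, Finset.card_pair hab, by simp, by simp, fun h => hne ?_⟩
      simp only [Finset.mem_insert, Finset.mem_singleton] at h
      rw [Sym2.eq_iff]
      grind
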